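/- Let A be a finite alphabet. Let AT be the least Boolean algebra containing every language A*aA* for a ∈ A (the class of alphabet testable languages). Define the levels of the Straubing-Thérien hierarchy by ST₀ = {∅, A*}, ST_{1/2} = Pol(ST₀), ST₁ = Bool(ST_{1/2}), ST_{3/2} = Pol(ST₁) and ST₂ = Bool(ST_{3/2}). Then ST₂ = BPol(AT), i.e., Bool(Pol(Bool(Pol({∅, A*})))) = Bool(Pol(AT)). -/

import Mathlib

open Set

namespace Paper

abbrev Lang (A : Type) := Set (List A)
abbrev LClass (A : Type) := Set (Set (List A))

variable {A R M : Type}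

/-- A lattice of languages: contains `∅` and `A*`, closed under finite union
and finite intersection. -/
def LangLattice (𝒞 : LClass A) : Prop :=
  (∅ : Lang A) ∈ 𝒞 ∧ (Set.univ : Lang A) ∈ 𝒞 ∧
    (∀ K L : Lang A, K ∈ 𝒞 → L ∈ 𝒞 → K ∪ L ∈ 𝒞) ∧
    (∀ K L : Lang A, K ∈ 𝒞 → L ∈ 𝒞 → K ∩ L ∈ 𝒞)

/-- A Boolean algebra of languages: a lattice closed under complement. -/
def LangBoolAlg (𝒞 : LClass A) : Prop :=
  LangLattice 𝒞 ∧ ∀ L : Lang A, L ∈ 𝒞 → Lᶜ ∈ 𝒞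

/-- A class is quotient-closed when it is closed under left and right quotients
by words. -/
def QuotientClosed (𝒞 : LClass A) : Prop :=
  ∀ L ∈ 𝒞, ∀ w : List A,
    {u : List A | w ++ u ∈ L} ∈ 𝒞 ∧ {u : List A | u ++ w ∈ L} ∈ 𝒞

/-- The canonical preorder `≤_𝒞` associated with a class `𝒞`. -/
def cle (𝒞 : LClass A) (w w' : List A) : Prop := ∀ L ∈ 𝒞, w ∈ L → w' ∈ L

/-- The canonical equivalence `∼_𝒞` associated with a class `𝒞`. -/
def ceq (𝒞 : LClass A) (w w' : List A) : Prop := ∀ L ∈ 𝒞, (w ∈ L ↔ w' ∈ L)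

/-- The `∼_𝒞`-class of the word `w`. -/
def cclass (𝒞 : LClass A) (w : List A) : Lang A := {v | ceq 𝒞 w v}

/-- `D` is a `∼_𝒞`-class. -/
def IsCClass (𝒞 : LClass A) (D : Lang A) : Prop := ∃ w : List A, D = cclass 𝒞 w

/-- Multiplication of `∼_𝒞`-classes (the class of the concatenation of
representatives). -/
def cmul (𝒞 : LClass A) (D E : Lang A) : Lang A :=
  {x | ∃ u ∈ D, ∃ v ∈ E, ceq 𝒞 (u ++ v) x}

/-- Language concatenation. -/
def cat (K L : Lang A) : Lang A := {w | ∃ u ∈ K, ∃ v ∈ L, u ++ v = w}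

/-- Marked concatenation `K a L`. -/
def mcat (K : Lang A) (a : A) (L : Lang A) : Lang A :=
  {w | ∃ u ∈ K, ∃ v ∈ L, u ++ a :: v = w}

/-- Boolean closure: the least Boolean algebra containing `𝒞`. -/
def BoolC (𝒞 : LClass A) : LClass A := ⋂₀ {𝒟 : LClass A | LangBoolAlg 𝒟 ∧ 𝒞 ⊆ 𝒟}

/-- Polynomial closure: the least class containing `𝒞` closed under union and
marked concatenation. -/
def PolC (𝒞 : LClass A) : LClass A :=
  ⋂₀ {𝒟 : LClass A | 𝒞 ⊆ 𝒟 ∧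
    (∀ K L : Lang A, K ∈ 𝒟 → L ∈ 𝒟 → K ∪ L ∈ 𝒟) ∧
    (∀ (K L : Lang A) (a : A), K ∈ 𝒟 → L ∈ 𝒟 → mcat K a L ∈ 𝒟)}

/-- A cover of `L`: a finite set of languages whose union includes `L`. -/
def IsCover (Ks : LClass A) (L : Lang A) : Prop := Ks.Finite ∧ L ⊆ ⋃₀ Ks

/-- A `𝒞`-cover of `L`: a cover all of whose members belong to `𝒞`. -/
def IsCCover (𝒞 Ks : LClass A) (L : Lang A) : Prop := IsCover Ks L ∧ Ks ⊆ 𝒞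

/-- `α : A* → M` is a monoid morphism. -/
def IsMonoidMorphism [Monoid M] (α : List A → M) : Prop :=
  α [] = 1 ∧ ∀ u v : List A, α (u ++ v) = α u * α v

/-- `α` recognizes `L`. -/
def Recognizes [Monoid M] (α : List A → M) (L : Lang A) : Prop :=
  ∃ F : Set M, L = α ⁻¹' F

/-- A language is regular when it is recognized by a monoid morphism into a
finite monoid. -/
def RegularLang (L : Lang A) : Prop :=
  ∃ (N : Type) (_ : Monoid N) (_ : Finite N) (α : List A → N),
    IsMonoidMorphism α ∧ Recognizes α L

/-- The canonical order on a rating set: `r ≤ s` iff `r + s = s`. -/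
def rle [Add R] (r s : R) : Prop := r + s = s

/-- A rating map: maps `∅` to `0` and commutes with binary union. -/
def IsRatingMap [AddCommMonoid R] (ρ : Lang A → R) : Prop :=
  ρ ∅ = 0 ∧ ∀ K L : Lang A, ρ (K ∪ L) = ρ K + ρ L

/-- A nice rating map: the value of any language is a finite sum of values of
its words. -/
def IsNice [AddCommMonoid R] (ρ : Lang A → R) : Prop :=
  ∀ K : Lang A, ∃ l : List (List A), (∀ w ∈ l, w ∈ K) ∧
    ρ K = (l.map fun w => ρ {w}).sum

/-- A multiplicative rating map: also a morphism for concatenation. -/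
def IsMultiplicative [Semiring R] (ρ : Lang A → R) : Prop :=
  ρ ({[]} : Lang A) = 1 ∧ ∀ K L : Lang A, ρ (cat K L) = ρ K * ρ L

/-- An endomorphism of the additive monoid `(R, +)`. -/
def IsAddEndo [AddCommMonoid R] (γ : R → R) : Prop :=
  γ 0 = 0 ∧ ∀ r s : R, γ (r + s) = γ r + γ s

/-- A quasi-multiplicative rating map for the endomorphism `γ`. -/
def IsQuasiMult [Semiring R] (ρ : Lang A → R) (γ : R → R) : Prop :=
  IsAddEndo γ ∧ (∀ q r s : R, γ (q * γ r * s) = γ (q * r * s)) ∧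
    ∀ K L : Lang A, ρ (cat K L) = γ (ρ K * ρ L)

/-- The `ρ`-imprint of a set of languages. -/
def imprint [Add R] (ρ : Lang A → R) (Ks : LClass A) : Set R :=
  {r | ∃ K ∈ Ks, rle r (ρ K)}

/-- The `𝒟`-optimal `ρ`-imprint on `L` (the imprint of any optimal `𝒟`-cover
of `L`, i.e. the intersection of the imprints of all `𝒟`-covers of `L`). -/
def optImprint [Add R] (𝒟 : LClass A) (ρ : Lang A → R) (L : Lang A) : Set R :=
  {r | ∀ Ks : LClass A, IsCCover 𝒟 Ks L → r ∈ imprint ρ Ks}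

/-- Downset operation on subsets of a rating set. -/
def dclos [Add R] (U : Set R) : Set R := {r | ∃ s ∈ U, rle r s}

/-- Pointwise multiplication of subsets of a rating set. -/
def smul [Mul R] (U V : Set R) : Set R := {x | ∃ u ∈ U, ∃ v ∈ V, u * v = x}

/-!
The inclusion `BPol(AT) ⊆ ST₂` holds because `{w | a ∈ w} = A* a A*`. For the converse it suffices
that `Pol(AT)` is a lattice containing each language of `Pol(ST₀)` along with its complement.

For intersections: if `L ∈ AT`, then `{(u, v) | u a v ∈ L}` is a finite union of rectangles `M × N`
with `M, N ∈ AT`. This property passes to `Pol(AT)`, and it turns `(K a L) ∩ X` into a finite union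
of languages `(K ∩ M) a (L ∩ N)`, so that closure under intersection follows by induction.

For complements: cutting at the first occurrence of `a` gives
`(A* a L)ᶜ = {w | a ∉ w} ∪ {w | a ∉ w} a Lᶜ` as soon as `L` is closed under adding prefixes, and
`((K₁ b K₂) a L)ᶜ = (K₁ b (K₂ a L))ᶜ` lets an induction on `K` handle `(K a L)ᶜ`.
-/

section Closures

variable {𝒞 𝒟 : LClass A} {K L : Lang A}

theorem langBoolAlg_BoolC (𝒞 : LClass A) : LangBoolAlg (BoolC 𝒞) :=
  ⟨⟨fun _ h𝒟 ↦ h𝒟.1.1.1, fun _ h𝒟 ↦ h𝒟.1.1.2.1,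
    fun K L hK hL 𝒟 h𝒟 ↦ h𝒟.1.1.2.2.1 K L (hK 𝒟 h𝒟) (hL 𝒟 h𝒟),
    fun K L hK hL 𝒟 h𝒟 ↦ h𝒟.1.1.2.2.2 K L (hK 𝒟 h𝒟) (hL 𝒟 h𝒟)⟩,
    fun L hL 𝒟 h𝒟 ↦ h𝒟.1.2 L (hL 𝒟 h𝒟)⟩

theorem subset_BoolC : 𝒞 ⊆ BoolC 𝒞 := fun _ hL _ h𝒟 ↦ h𝒟.2 hL

theorem BoolC_subset (h𝒟 : LangBoolAlg 𝒟) (h : 𝒞 ⊆ 𝒟) : BoolC 𝒞 ⊆ 𝒟 :=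
  fun _ hL ↦ hL 𝒟 ⟨h𝒟, h⟩

theorem BoolC_mono (h : 𝒞 ⊆ 𝒟) : BoolC 𝒞 ⊆ BoolC 𝒟 :=
  BoolC_subset (langBoolAlg_BoolC 𝒟) (h.trans subset_BoolC)

theorem LangLattice.langBoolAlg_mem_and_compl_mem (h𝒞 : LangLattice 𝒞) :
    LangBoolAlg {L : Lang A | L ∈ 𝒞 ∧ Lᶜ ∈ 𝒞} := by
  obtain ⟨empty_mem, univ_mem, union_mem, inter_mem⟩ := h𝒞
  refine ⟨⟨?_, ?_, fun K L hK hL ↦ ?_, fun K L hK hL ↦ ?_⟩, fun L hL ↦ ?_⟩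
  · exact ⟨empty_mem, by rwa [compl_empty]⟩
  · exact ⟨univ_mem, by rwa [compl_univ]⟩
  · exact ⟨union_mem _ _ hK.1 hL.1, by rw [compl_union]; exact inter_mem _ _ hK.2 hL.2⟩
  · exact ⟨inter_mem _ _ hK.1 hL.1, by rw [compl_inter]; exact union_mem _ _ hK.2 hL.2⟩
  · exact ⟨hL.2, by rw [compl_compl]; exact hL.1⟩

theorem subset_PolC : 𝒞 ⊆ PolC 𝒞 := fun _ hL _ h𝒟 ↦ h𝒟.1 hL

theorem union_mem_PolC (hK : K ∈ PolC 𝒞) (hL : L ∈ PolC 𝒞) : K ∪ L ∈ PolC 𝒞 :=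
  fun 𝒟 h𝒟 ↦ h𝒟.2.1 K L (hK 𝒟 h𝒟) (hL 𝒟 h𝒟)

theorem mcat_mem_PolC (a : A) (hK : K ∈ PolC 𝒞) (hL : L ∈ PolC 𝒞) : mcat K a L ∈ PolC 𝒞 :=
  fun 𝒟 h𝒟 ↦ h𝒟.2.2 K L a (hK 𝒟 h𝒟) (hL 𝒟 h𝒟)

theorem PolC_subset (h : 𝒞 ⊆ 𝒟) (union_mem : ∀ K L, K ∈ 𝒟 → L ∈ 𝒟 → K ∪ L ∈ 𝒟)
    (mcat_mem : ∀ K L a, K ∈ 𝒟 → L ∈ 𝒟 → mcat K a L ∈ 𝒟) : PolC 𝒞 ⊆ 𝒟 :=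
  fun _ hL ↦ hL 𝒟 ⟨h, union_mem, mcat_mem⟩

theorem PolC_subset_PolC (h : 𝒞 ⊆ PolC 𝒟) : PolC 𝒞 ⊆ PolC 𝒟 :=
  PolC_subset h (fun _ _ ↦ union_mem_PolC) (fun _ _ a ↦ mcat_mem_PolC a)

@[elab_as_elim]
theorem PolC_induction {motive : (L : Lang A) → L ∈ PolC 𝒞 → Prop}
    (mem : ∀ L (hL : L ∈ 𝒞), motive L (subset_PolC hL))
    (union : ∀ K L hK hL, motive K hK → motive L hL → motive (K ∪ L) (union_mem_PolC hK hL))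
    (mcat : ∀ K a L hK hL, motive K hK → motive L hL → motive (mcat K a L) (mcat_mem_PolC a hK hL))
    (hL : L ∈ PolC 𝒞) : motive L hL :=
  (PolC_subset (𝒟 := {L | ∃ hL : L ∈ PolC 𝒞, motive L hL}) (fun L hL ↦ ⟨_, mem L hL⟩)
    (fun K L ⟨_, hK⟩ ⟨_, hL⟩ ↦ ⟨_, union K L _ _ hK hL⟩)
    (fun K L a ⟨_, hK⟩ ⟨_, hL⟩ ↦ ⟨_, mcat K a L _ _ hK hL⟩) hL).2

end Closures

section MarkedConcatenation

/-- The word `u a v` obtained by joining a pair of words `(u, v)` with the letter `a`. Preimages of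
languages under this map describe all ways of cutting their words at an occurrence of `a`. -/
def joinAt (a : A) (p : List A × List A) : List A := p.1 ++ a :: p.2

theorem mcat_eq_image_joinAt (K : Lang A) (a : A) (L : Lang A) :
    mcat K a L = joinAt a '' (K ×ˢ L) := by
  ext w
  simp [mcat, joinAt, and_assoc]

theorem mcat_empty_left (a : A) (L : Lang A) : mcat ∅ a L = ∅ := by
  rw [mcat_eq_image_joinAt, empty_prod, image_empty]

theorem mcat_union_left (K₁ K₂ : Lang A) (a : A) (L : Lang A) :
    mcat (K₁ ∪ K₂) a L = mcat K₁ a L ∪ mcat K₂ a L := by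
  simp only [mcat_eq_image_joinAt, union_prod, image_union]

theorem mcat_assoc (K : Lang A) (a : A) (L : Lang A) (b : A) (M : Lang A) :
    mcat (mcat K a L) b M = mcat K a (mcat L b M) := by
  ext w
  constructor
  · rintro ⟨_, ⟨u, hu, v, hv, rfl⟩, z, hz, rfl⟩
    exact ⟨u, hu, _, ⟨v, hv, z, hz, rfl⟩, by simp⟩
  · rintro ⟨u, hu, _, ⟨v, hv, z, hz, rfl⟩, rfl⟩
    exact ⟨_, ⟨u, hu, v, hv, rfl⟩, z, hz, by simp⟩

theorem mcat_univ_univ (a : A) : mcat univ a univ = {w : List A | a ∈ w} := by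
  ext w
  simp [mcat, List.mem_iff_append, eq_comm]

theorem append_cons_eq_append_cons_iff {α : Type*} {u v x y : List α} {a b : α} :
    u ++ a :: v = x ++ b :: y ↔
      (u = x ∧ a = b ∧ v = y) ∨ (∃ z, x = u ++ a :: z ∧ v = z ++ b :: y) ∨
        ∃ z, u = x ++ b :: z ∧ y = z ++ a :: v := by
  rw [List.append_eq_append_iff]
  constructor
  · rintro (⟨_ | ⟨c, z⟩, rfl, h⟩ | ⟨_ | ⟨c, z⟩, rfl, h⟩) <;> simp_all
  · rintro (⟨rfl, rfl, rfl⟩ | ⟨z, rfl, rfl⟩ | ⟨z, rfl, rfl⟩) <;> simp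

/-- The three parts correspond to the cut being at, before, or after the marked letter `b`. -/
theorem preimage_joinAt_mcat (a : A) (K : Lang A) (b : A) (L : Lang A) :
    joinAt a ⁻¹' mcat K b L =
      {p | a = b ∧ p ∈ K ×ˢ L} ∪
        ((fun q ↦ (q.1.1, joinAt b (q.1.2, q.2))) '' ((joinAt a ⁻¹' K) ×ˢ L) ∪
          (fun q ↦ (joinAt b (q.1, q.2.1), q.2.2)) '' (K ×ˢ (joinAt a ⁻¹' L))) := by
  ext ⟨u, v⟩
  constructor
  · rintro ⟨x, hx, y, hy, h⟩
    rcases append_cons_eq_append_cons_iff.1 h.symm with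
      ⟨rfl, rfl, rfl⟩ | ⟨z, rfl, rfl⟩ | ⟨z, rfl, rfl⟩
    · exact .inl ⟨rfl, hx, hy⟩
    · exact .inr (.inl ⟨((u, z), y), ⟨hx, hy⟩, rfl⟩)
    · exact .inr (.inr ⟨(x, (z, v)), ⟨hx, hy⟩, rfl⟩)
  · rintro (⟨rfl, hu, hv⟩ | ⟨⟨⟨x, z⟩, y⟩, ⟨hx, hy⟩, h⟩ | ⟨⟨x, ⟨z, y⟩⟩, ⟨hx, hy⟩, h⟩)
    · exact ⟨u, hu, v, hv, rfl⟩
    · obtain ⟨rfl, rfl⟩ := Prod.mk.inj h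
      exact ⟨_, hx, y, hy, by simp [joinAt]⟩
    · obtain ⟨rfl, rfl⟩ := Prod.mk.inj h
      exact ⟨x, hx, _, hy, by simp [joinAt]⟩

end MarkedConcatenation

/-- `FinRectUnion 𝒞 R` says that `R` is a finite union of rectangles `M ×ˢ N` with sides in `𝒞`. -/
inductive FinRectUnion {α : Type*} (𝒞 : Set (Set α)) : Set (α × α) → Prop
  | empty : FinRectUnion 𝒞 ∅
  | prod {M N : Set α} : M ∈ 𝒞 → N ∈ 𝒞 → FinRectUnion 𝒞 (M ×ˢ N)
  | union {R S : Set (α × α)} : FinRectUnion 𝒞 R → FinRectUnion 𝒞 S → FinRectUnion 𝒞 (R ∪ S)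

namespace FinRectUnion

variable {α : Type*} {𝒞 𝒟 : Set (Set α)} {R S : Set (α × α)}

theorem mono (h : 𝒞 ⊆ 𝒟) (hR : FinRectUnion 𝒞 R) : FinRectUnion 𝒟 R := by
  induction hR with
  | empty => exact .empty
  | prod hM hN => exact .prod (h hM) (h hN)
  | union _ _ ihR ihS => exact .union ihR ihS

theorem prod_inter {K L : Set α} (hK : ∀ M ∈ 𝒞, K ∩ M ∈ 𝒟) (hL : ∀ N ∈ 𝒞, L ∩ N ∈ 𝒟)
    (hR : FinRectUnion 𝒞 R) : FinRectUnion 𝒟 (K ×ˢ L ∩ R) := by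
  induction hR with
  | empty => rw [inter_empty]; exact .empty
  | prod hM hN => rw [prod_inter_prod]; exact .prod (hK _ hM) (hL _ hN)
  | union _ _ ihR ihS => rw [inter_union_distrib_left]; exact .union ihR ihS

theorem inter (inter_mem : ∀ M N, M ∈ 𝒞 → N ∈ 𝒞 → M ∩ N ∈ 𝒞) (hR : FinRectUnion 𝒞 R)
    (hS : FinRectUnion 𝒞 S) : FinRectUnion 𝒞 (R ∩ S) := by
  induction hR with
  | empty => rw [empty_inter]; exact .empty
  | prod hM hN => exact hS.prod_inter (fun _ ↦ inter_mem _ _ hM) (fun _ ↦ inter_mem _ _ hN)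
  | union _ _ ihR ihS => rw [union_inter_distrib_right]; exact .union ihR ihS

theorem compl (univ_mem : univ ∈ 𝒞) (inter_mem : ∀ M N, M ∈ 𝒞 → N ∈ 𝒞 → M ∩ N ∈ 𝒞)
    (compl_mem : ∀ M, M ∈ 𝒞 → Mᶜ ∈ 𝒞) (hR : FinRectUnion 𝒞 R) : FinRectUnion 𝒞 Rᶜ := by
  induction hR with
  | empty => rw [compl_empty, ← univ_prod_univ]; exact .prod univ_mem univ_mem
  | prod hM hN =>
    rw [compl_prod_eq_union]
    exact .union (.prod (compl_mem _ hM) univ_mem) (.prod univ_mem (compl_mem _ hN))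
  | union _ _ ihR ihS => rw [compl_union]; exact ihR.inter inter_mem ihS

variable {𝒞 : LClass A} {R : Set (List A × List A)} {K L : Lang A}

theorem image_joinAt_snd (b : A) (hL : L ∈ PolC 𝒞) (hR : FinRectUnion (PolC 𝒞) R) :
    FinRectUnion (PolC 𝒞) ((fun q ↦ (q.1.1, joinAt b (q.1.2, q.2))) '' (R ×ˢ L)) := by
  induction hR with
  | empty => rw [empty_prod, image_empty]; exact .empty
  | @prod M N hM hN =>
    have image_eq : (fun q : (List A × List A) × List A ↦ (q.1.1, joinAt b (q.1.2, q.2))) ''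
        ((M ×ˢ N) ×ˢ L) = M ×ˢ mcat N b L := by
      ext ⟨u, v⟩
      simp only [mcat, joinAt, mem_image, mem_prod, Prod.exists, Prod.mk.injEq, mem_ofPred_eq]
      grind
    rw [image_eq]
    exact .prod hM (mcat_mem_PolC b hN hL)
  | union _ _ ihR ihS => rw [union_prod, image_union]; exact .union ihR ihS

theorem image_joinAt_fst (b : A) (hK : K ∈ PolC 𝒞) (hR : FinRectUnion (PolC 𝒞) R) :
    FinRectUnion (PolC 𝒞) ((fun q ↦ (joinAt b (q.1, q.2.1), q.2.2)) '' (K ×ˢ R)) := by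
  induction hR with
  | empty => rw [prod_empty, image_empty]; exact .empty
  | @prod M N hM hN =>
    have image_eq : (fun q : List A × (List A × List A) ↦ (joinAt b (q.1, q.2.1), q.2.2)) ''
        (K ×ˢ (M ×ˢ N)) = mcat K b M ×ˢ N := by
      ext ⟨u, v⟩
      simp only [mcat, joinAt, mem_image, mem_prod, Prod.exists, Prod.mk.injEq, mem_ofPred_eq]
      grind
    rw [image_eq]
    exact .prod (mcat_mem_PolC b hK hM) hN
  | union _ _ ihR ihS => rw [prod_union, image_union]; exact .union ihR ihS

theorem image_joinAt_mem_PolC (empty_mem : ∅ ∈ PolC 𝒞) (a : A)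
    (hR : FinRectUnion (PolC 𝒞) R) : joinAt a '' R ∈ PolC 𝒞 := by
  induction hR with
  | empty => rwa [image_empty]
  | prod hM hN => rw [← mcat_eq_image_joinAt]; exact mcat_mem_PolC a hM hN
  | union _ _ ihR ihS => rw [image_union]; exact union_mem_PolC ihR ihS

end FinRectUnion

section CutsIn

/-- `CutsIn 𝒞 L`: cutting the words of `L` at any letter yields a finite union of rectangles with
sides in `𝒞`. For `L` regular and `𝒞` a Boolean algebra closed under quotients, this holds for
every `L ∈ 𝒞`; here it stands in for both assumptions. -/
def CutsIn (𝒞 : LClass A) (L : Lang A) : Prop :=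
  ∀ a : A, FinRectUnion 𝒞 (joinAt a ⁻¹' L)

variable {𝒞 : LClass A} {K L : Lang A}

theorem langBoolAlg_cutsIn (h𝒞 : LangBoolAlg 𝒞) : LangBoolAlg {L | CutsIn 𝒞 L} := by
  obtain ⟨⟨-, univ_mem, -, inter_mem⟩, compl_mem⟩ := h𝒞
  refine ⟨⟨fun _ ↦ .empty, fun a ↦ ?_, fun K L hK hL a ↦ (hK a).union (hL a),
    fun K L hK hL a ↦ (hK a).inter inter_mem (hL a)⟩, fun L hL a ↦ ?_⟩
  · rw [preimage_univ, ← univ_prod_univ]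
    exact .prod univ_mem univ_mem
  · exact (hL a).compl univ_mem inter_mem compl_mem

theorem cutsIn_PolC (h𝒞 : ∀ L ∈ 𝒞, CutsIn 𝒞 L) (hL : L ∈ PolC 𝒞) : CutsIn (PolC 𝒞) L := by
  induction hL using PolC_induction with
  | mem L hL => exact fun a ↦ (h𝒞 L hL a).mono subset_PolC
  | union K L _ _ ihK ihL => exact fun a ↦ (ihK a).union (ihL a)
  | mcat K b L hK hL ihK ihL =>
    intro a
    rw [preimage_joinAt_mcat]
    refine .union ?_ (.union ((ihK a).image_joinAt_snd b hL) ((ihL a).image_joinAt_fst b hK))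
    by_cases hab : a = b
    · simpa [hab] using .prod hK hL
    · simpa [hab] using .empty

theorem mcat_inter_mem_PolC {𝒟 : LClass A} (empty_mem : ∅ ∈ PolC 𝒞) (a : A) {X : Lang A}
    (hX : CutsIn 𝒟 X) (hK : ∀ M ∈ 𝒟, K ∩ M ∈ PolC 𝒞) (hL : ∀ N ∈ 𝒟, L ∩ N ∈ PolC 𝒞) :
    mcat K a L ∩ X ∈ PolC 𝒞 := by
  rw [mcat_eq_image_joinAt, ← image_inter_preimage]
  exact ((hX a).prod_inter hK hL).image_joinAt_mem_PolC empty_mem a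

theorem inter_mem_PolC_of_mem (h𝒞 : LangLattice 𝒞) (hcuts : ∀ L ∈ 𝒞, CutsIn 𝒞 L)
    (hK : K ∈ PolC 𝒞) : ∀ X ∈ 𝒞, K ∩ X ∈ PolC 𝒞 := by
  induction hK using PolC_induction with
  | mem K hK => exact fun X hX ↦ subset_PolC (h𝒞.2.2.2 K X hK hX)
  | union K L _ _ ihK ihL =>
    intro X hX
    rw [union_inter_distrib_right]
    exact union_mem_PolC (ihK X hX) (ihL X hX)
  | mcat K a L _ _ ihK ihL =>
    exact fun X hX ↦ mcat_inter_mem_PolC (subset_PolC h𝒞.1) a (hcuts X hX) ihK ihL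

theorem inter_mem_PolC (h𝒞 : LangLattice 𝒞) (hcuts : ∀ L ∈ 𝒞, CutsIn 𝒞 L)
    (hK : K ∈ PolC 𝒞) : ∀ X ∈ PolC 𝒞, K ∩ X ∈ PolC 𝒞 := by
  induction hK using PolC_induction with
  | mem K hK =>
    intro X hX
    rw [inter_comm]
    exact inter_mem_PolC_of_mem h𝒞 hcuts hX K hK
  | union K L _ _ ihK ihL =>
    intro X hX
    rw [union_inter_distrib_right]
    exact union_mem_PolC (ihK X hX) (ihL X hX)
  | mcat K a L _ _ ihK ihL =>
    exact fun X hX ↦ mcat_inter_mem_PolC (subset_PolC h𝒞.1) a (cutsIn_PolC hcuts hX) ihK ihL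

theorem langLattice_PolC (h𝒞 : LangLattice 𝒞) (hcuts : ∀ L ∈ 𝒞, CutsIn 𝒞 L) :
    LangLattice (PolC 𝒞) :=
  ⟨subset_PolC h𝒞.1, subset_PolC h𝒞.2.1, fun _ _ ↦ union_mem_PolC,
    fun _ X hK hX ↦ inter_mem_PolC h𝒞 hcuts hK X hX⟩

end CutsIn

section AlphabetTestable

variable (A) in
/-- The class `AT` of alphabet testable languages. -/
def alphabetTestable : LClass A := BoolC {L | ∃ a : A, L = {w : List A | a ∈ w}}

theorem setOf_mem_mem_alphabetTestable (a : A) : {w : List A | a ∈ w} ∈ alphabetTestable A :=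
  subset_BoolC ⟨a, rfl⟩

theorem langBoolAlg_alphabetTestable : LangBoolAlg (alphabetTestable A) :=
  langBoolAlg_BoolC _

theorem cutsIn_setOf_mem (b : A) : CutsIn (alphabetTestable A) {w : List A | b ∈ w} := by
  intro a
  have univ_mem := (langBoolAlg_alphabetTestable (A := A)).1.2.1
  have letter_mem := setOf_mem_mem_alphabetTestable b
  by_cases hab : b = a
  · have preimage_eq : joinAt a ⁻¹' {w : List A | b ∈ w} = univ ×ˢ univ := by
      ext; simp [joinAt, hab]
    rw [preimage_eq]
    exact .prod univ_mem univ_mem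
  · have preimage_eq : joinAt a ⁻¹' {w : List A | b ∈ w} =
        {w : List A | b ∈ w} ×ˢ univ ∪ univ ×ˢ {w : List A | b ∈ w} := by
      ext; simp [joinAt, hab]
    rw [preimage_eq]
    exact .union (.prod letter_mem univ_mem) (.prod univ_mem letter_mem)

theorem cutsIn_alphabetTestable {L : Lang A} (hL : L ∈ alphabetTestable A) :
    CutsIn (alphabetTestable A) L := by
  refine BoolC_subset (langBoolAlg_cutsIn langBoolAlg_alphabetTestable) ?_ hL
  rintro _ ⟨b, rfl⟩
  exact cutsIn_setOf_mem b

theorem langLattice_PolC_alphabetTestable : LangLattice (PolC (alphabetTestable A)) :=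
  langLattice_PolC langBoolAlg_alphabetTestable.1 fun _ ↦ cutsIn_alphabetTestable

end AlphabetTestable

section LevelOne

/-- `L` is a left ideal of the free monoid: it is closed under adding a prefix. -/
def IsLeftIdeal (L : Lang A) : Prop := ∀ v ∈ L, ∀ u, u ++ v ∈ L

variable {K L : Lang A}

theorem IsLeftIdeal.mcat (hK : IsLeftIdeal K) (a : A) (L : Lang A) :
    IsLeftIdeal (mcat K a L) := by
  rintro _ ⟨u, hu, v, hv, rfl⟩ x
  exact ⟨x ++ u, hK u hu x, v, hv, by simp⟩

theorem isLeftIdeal_of_mem_PolC_trivial (hL : L ∈ PolC {∅, univ}) : IsLeftIdeal L := by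
  induction hL using PolC_induction with
  | mem L hL =>
    rcases hL with rfl | rfl
    · exact fun _ hv ↦ hv.elim
    · exact fun _ _ _ ↦ trivial
  | union K L _ _ ihK ihL => exact fun v hv u ↦ hv.imp (ihK v · u) (ihL v · u)
  | mcat K a L _ _ ihK _ => exact ihK.mcat a L

theorem IsLeftIdeal.compl_mcat_univ (hL : IsLeftIdeal L) (a : A) :
    (Paper.mcat univ a L)ᶜ = {w | a ∈ w}ᶜ ∪ Paper.mcat {w | a ∈ w}ᶜ a Lᶜ := by
  ext w
  constructor
  · intro hw
    by_cases ha : a ∈ w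
    · obtain ⟨u, v, rfl, hu⟩ := List.eq_append_cons_of_mem ha
      exact .inr ⟨u, hu, v, fun hv ↦ hw ⟨u, trivial, v, hv, rfl⟩, rfl⟩
    · exact .inl ha
  · rintro (ha | ⟨u, hu, v, hv, rfl⟩) ⟨x, -, y, hy, h⟩
    · exact ha (by simp [← h])
    · rcases append_cons_eq_append_cons_iff.1 h with
        ⟨-, -, rfl⟩ | ⟨z, rfl, -⟩ | ⟨z, -, rfl⟩
      · exact hv hy
      · exact hu (by simp)
      · exact hv (by simpa using hL y hy (z ++ [a]))

theorem compl_mcat_mem_PolC_alphabetTestable (hK : K ∈ PolC {∅, univ}) :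
    ∀ (a : A) (L : Lang A), IsLeftIdeal L → Lᶜ ∈ PolC (alphabetTestable A) →
      (mcat K a L)ᶜ ∈ PolC (alphabetTestable A) := by
  obtain ⟨-, univ_mem, -, inter_mem⟩ := langLattice_PolC_alphabetTestable (A := A)
  induction hK using PolC_induction with
  | mem K hK =>
    intro a L hL hLc
    rcases hK with rfl | rfl
    · rwa [mcat_empty_left, compl_empty]
    · have avoid_mem : {w : List A | a ∈ w}ᶜ ∈ PolC (alphabetTestable A) :=
        subset_PolC (langBoolAlg_alphabetTestable.2 _ (setOf_mem_mem_alphabetTestable a))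
      rw [hL.compl_mcat_univ]
      exact union_mem_PolC avoid_mem (mcat_mem_PolC a avoid_mem hLc)
  | union K₁ K₂ _ _ ihK₁ ihK₂ =>
    intro a L hL hLc
    rw [mcat_union_left, compl_union]
    exact inter_mem _ _ (ihK₁ a L hL hLc) (ihK₂ a L hL hLc)
  | mcat K₁ b K₂ _ hK₂ ihK₁ ihK₂ =>
    intro a L hL hLc
    rw [mcat_assoc]
    exact ihK₁ b _ ((isLeftIdeal_of_mem_PolC_trivial hK₂).mcat a L) (ihK₂ a L hL hLc)

theorem compl_mem_PolC_alphabetTestable (hL : L ∈ PolC {∅, univ}) :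
    Lᶜ ∈ PolC (alphabetTestable A) := by
  obtain ⟨empty_mem, univ_mem, -, inter_mem⟩ := langLattice_PolC_alphabetTestable (A := A)
  induction hL using PolC_induction with
  | mem L hL =>
    rcases hL with rfl | rfl
    · rwa [compl_empty]
    · rwa [compl_univ]
  | union K L _ _ ihK ihL => rw [compl_union]; exact inter_mem _ _ ihK ihL
  | mcat K a L hK hL _ ihL =>
    exact compl_mcat_mem_PolC_alphabetTestable hK a L (isLeftIdeal_of_mem_PolC_trivial hL) ihL

theorem BoolC_PolC_trivial_subset_PolC_alphabetTestable :
    BoolC (PolC {∅, univ}) ⊆ PolC (alphabetTestable A) := by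
  have hlattice := langLattice_PolC_alphabetTestable (A := A)
  have trivial_subset : {∅, univ} ⊆ PolC (alphabetTestable A) := by
    rintro _ (rfl | rfl)
    exacts [hlattice.1, hlattice.2.1]
  exact (BoolC_subset hlattice.langBoolAlg_mem_and_compl_mem fun L hL ↦
    ⟨PolC_subset_PolC trivial_subset hL, compl_mem_PolC_alphabetTestable hL⟩).trans fun _ ↦ And.left

theorem alphabetTestable_subset_BoolC_PolC_trivial :
    alphabetTestable A ⊆ BoolC (PolC {∅, univ}) := by
  refine BoolC_mono ?_
  rintro _ ⟨a, rfl⟩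
  have univ_mem : univ ∈ PolC ({∅, univ} : LClass A) := subset_PolC (.inr rfl)
  rw [← mcat_univ_univ]
  exact mcat_mem_PolC a univ_mem univ_mem

end LevelOne

theorem statement19_general {A : Type} :
    BoolC (PolC (BoolC (PolC ({∅, Set.univ} : LClass A)))) =
      BoolC (PolC (BoolC
        {L : Lang A | ∃ a : A, L = {w : List A | a ∈ w}})) :=
  congrArg BoolC <| Subset.antisymm
    (PolC_subset_PolC BoolC_PolC_trivial_subset_PolC_alphabetTestable)
    (PolC_subset_PolC (alphabetTestable_subset_BoolC_PolC_trivial.trans subset_PolC))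

/-- Level two of the Straubing-Thérien hierarchy equals
`BPol(AT)`, where `AT` is the class of alphabet testable languages. -/
theorem statement19 {A : Type} [Fintype A] :
    BoolC (PolC (BoolC (PolC ({∅, Set.univ} : LClass A)))) =
      BoolC (PolC (BoolC
        {L : Lang A | ∃ a : A, L = {w : List A | a ∈ w}})) :=
  statement19_general

end Paper
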